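/- Let N ≥ 3 be an integer, let C > 0, γ > 2, and let β be a real number with -(N-2)-(γ-2) < β < -(N-2). Then there exists R ≥ 1 such that for every m ≥ 0 the function h : ℝ^N \ {0} → ℝ defined by h(x) := (|x|^{-(N-2)} + |x|^β) e^{-m|x|} satisfies -Δh(x) + C |x|^{-γ} h(x) + m² h(x) ≤ 0 for all x ∈ ℝ^N with |x| > R. -/

import Mathlib

open MeasureTheory Filter Set Topology
noncomputable section

/-- The Euclidean Laplacian of `u : ℝ^N → ℝ`: the sum of the second partial derivatives. -/
def lap {N : ℕ} (u : EuclideanSpace ℝ (Fin N) → ℝ) (x : EuclideanSpace ℝ (Fin N)) : ℝ :=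
  ∑ i, fderiv ℝ (fun y => fderiv ℝ u y (EuclideanSpace.single i 1)) x (EuclideanSpace.single i 1)

/-!
Write `D_p(r) = r ^ p * e ^ (-m r)` and let `n` be the dimension. Off the origin,
`Δ D_p - m² D_p = p (p + n - 2) D_{p - 2} - m (2 p + n - 1) D_{p - 1}`,
so once `2 p ≤ 1 - n` the drift term is nonnegative for every `m ≥ 0` and
`Δ D_p - m² D_p ≥ p (p + n - 2) D_{p - 2}`. For the barrier `D_a + D_β` with `a = -(n - 2)` this
gain vanishes at `p = a` (the fundamental solution), while at `p = β < a` it is a positive multiple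
of `D_{β - 2}`, which dominates `r ^ (-γ) (D_a + D_β)` at infinity since `a - γ < β - 2` and
`2 < γ`. In this comparison the factor `e ^ (-m r)` cancels, so the threshold radius does not
depend on `m`.
-/

open Module Asymptotics
open scoped InnerProductSpace Laplacian

lemma lap_eq_laplacian {N : ℕ} {u : EuclideanSpace ℝ (Fin N) → ℝ} {x : EuclideanSpace ℝ (Fin N)}
    (hu : ContDiffAt ℝ 2 u x) : lap u x = Δ u x := by
  have hfderiv : DifferentiableAt ℝ (fderiv ℝ u) x :=
    (hu.fderiv_right (m := 1) le_rfl).differentiableAt one_ne_zero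
  simp [lap, InnerProductSpace.laplacian_eq_iteratedFDeriv_orthonormalBasis u
    (EuclideanSpace.basisFun (Fin N) ℝ), iteratedFDeriv_two_apply,
    fderiv_clm_apply hfderiv (differentiableAt_const _)]

section Radial

variable {E : Type*} [NormedAddCommGroup E] [InnerProductSpace ℝ E] {g g' : ℝ → ℝ} {g'' : ℝ} {x : E}

lemma hasFDerivAt_norm_of_ne_zero (hx : x ≠ 0) :
    HasFDerivAt (fun y : E => ‖y‖) (‖x‖⁻¹ • innerSL ℝ x) x := by
  have hsqrt := (hasStrictFDerivAt_norm_sq x).hasFDerivAt.sqrt (by positivity)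
  simp only [Real.sqrt_sq (norm_nonneg _)] at hsqrt
  refine hsqrt.congr_fderiv ?_
  ext v
  simp only [one_div, mul_inv_rev, smul_apply, coe_innerSL_apply, nsmul_eq_mul, Nat.cast_ofNat,
    smul_eq_mul]
  field_simp

lemma fderiv_comp_norm (hx : x ≠ 0) {c : ℝ} (hg : HasDerivAt g c ‖x‖) :
    fderiv ℝ (fun y : E => g ‖y‖) x = (c / ‖x‖) • innerSL ℝ x := by
  rw [div_eq_mul_inv, mul_smul]
  exact (hg.comp_hasFDerivAt x (hasFDerivAt_norm_of_ne_zero hx)).fderiv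

lemma fderiv_fderiv_comp_norm_apply (hx : x ≠ 0) (hg : ∀ᶠ r in 𝓝 ‖x‖, HasDerivAt g (g' r) r)
    (hg' : HasDerivAt g' g'' ‖x‖) (v w : E) :
    fderiv ℝ (fderiv ℝ (fun y : E => g ‖y‖)) x v w =
      g' ‖x‖ / ‖x‖ * ⟪v, w⟫_ℝ + (g'' - g' ‖x‖ / ‖x‖) / ‖x‖ ^ 2 * (⟪x, v⟫_ℝ * ⟪x, w⟫_ℝ) := by
  have hx' : ‖x‖ ≠ 0 := norm_ne_zero_iff.mpr hx
  have hgradient : fderiv ℝ (fun y : E => g ‖y‖) =ᶠ[𝓝 x] fun y => (g' ‖y‖ / ‖y‖) • innerSL ℝ y := by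
    filter_upwards [isOpen_ne.mem_nhds hx, continuous_norm.continuousAt.eventually hg] with y hy hgy
    exact fderiv_comp_norm hy hgy
  have hslope : HasFDerivAt (fun y : E => g' ‖y‖ / ‖y‖) _ x :=
    (hg'.fun_div (hasDerivAt_id' _) hx').comp_hasFDerivAt x (hasFDerivAt_norm_of_ne_zero hx)
  rw [hgradient.fderiv_eq, (hslope.fun_smul (innerSL ℝ).hasFDerivAt).fderiv]
  simp only [mul_one, add_apply, smul_apply, ContinuousLinearMap.smulRight_apply,
    innerSL_apply_apply ℝ, smul_eq_mul, add_right_inj]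
  field_simp

lemma laplacian_comp_norm [FiniteDimensional ℝ E] (hx : x ≠ 0)
    (hg : ∀ᶠ r in 𝓝 ‖x‖, HasDerivAt g (g' r) r) (hg' : HasDerivAt g' g'' ‖x‖) :
    Δ (fun y : E => g ‖y‖) x = g'' + (finrank ℝ E - 1) * (‖x‖⁻¹ * g' ‖x‖) := by
  have hx' : ‖x‖ ≠ 0 := norm_ne_zero_iff.mpr hx
  simp only [InnerProductSpace.laplacian_eq_iteratedFDeriv_stdOrthonormalBasis,
    iteratedFDeriv_two_apply, Matrix.cons_val_zero, Matrix.cons_val_one,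
    fderiv_fderiv_comp_norm_apply hx hg hg', Finset.sum_add_distrib, ← Finset.mul_sum, ← sq,
    OrthonormalBasis.sum_sq_inner_left, real_inner_self_eq_norm_sq, OrthonormalBasis.norm_eq_one,
    one_pow, Finset.sum_const, Finset.card_univ, Fintype.card_fin, nsmul_eq_mul, mul_one]
  field_simp
  ring

end Radial

/-- The exponentially damped power `r ↦ r ^ p * e ^ (-m r)`, the radial profile of the summands of
the barrier. The rate `m` comes first because it is shared by all the exponents `p` involved. -/
def dampedPow (m p r : ℝ) : ℝ := r ^ p * Real.exp (-(m * r))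

section DampedPow

variable {m p r : ℝ}

lemma dampedPow_nonneg (hr : 0 ≤ r) : 0 ≤ dampedPow m p r := by
  unfold dampedPow
  positivity

lemma inv_mul_dampedPow (hr : r ≠ 0) : r⁻¹ * dampedPow m p r = dampedPow m (p - 1) r := by
  rw [dampedPow, dampedPow, Real.rpow_sub_one hr]
  ring

lemma hasDerivAt_dampedPow (hr : r ≠ 0) :
    HasDerivAt (dampedPow m p) (p * dampedPow m (p - 1) r - m * dampedPow m p r) r := by
  have hpow := Real.hasDerivAt_rpow_const (p := p) (Or.inl hr)
  have hexp := ((hasDerivAt_id' r).const_mul m).fun_neg.exp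
  refine (hpow.fun_mul hexp).congr_deriv ?_
  unfold dampedPow
  ring

variable {E : Type*} [NormedAddCommGroup E] [InnerProductSpace ℝ E] {x : E}

lemma contDiffAt_dampedPow_norm {k : WithTop ℕ∞} (hx : x ≠ 0) :
    ContDiffAt ℝ k (fun y : E => dampedPow m p ‖y‖) x := by
  have hnorm : ContDiffAt ℝ k (fun y : E => ‖y‖) x := contDiffAt_norm ℝ hx
  exact (hnorm.rpow_const_of_ne (norm_ne_zero_iff.mpr hx)).mul
    (contDiffAt_const.mul hnorm).neg.exp

variable [FiniteDimensional ℝ E]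

lemma laplacian_dampedPow_norm (hx : x ≠ 0) :
    Δ (fun y : E => dampedPow m p ‖y‖) x =
      p * (p + finrank ℝ E - 2) * dampedPow m (p - 2) ‖x‖
        - m * (2 * p + finrank ℝ E - 1) * dampedPow m (p - 1) ‖x‖ + m ^ 2 * dampedPow m p ‖x‖ := by
  have hx' : ‖x‖ ≠ 0 := norm_ne_zero_iff.mpr hx
  have hderiv : ∀ᶠ r in 𝓝 ‖x‖,
      HasDerivAt (dampedPow m p) (p * dampedPow m (p - 1) r - m * dampedPow m p r) r :=
    (isOpen_ne.eventually_mem hx').mono fun r hr => hasDerivAt_dampedPow hr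
  have hderiv₂ := ((hasDerivAt_dampedPow (m := m) (p := p - 1) hx').const_mul p).fun_sub
    ((hasDerivAt_dampedPow (m := m) (p := p) hx').const_mul m)
  have hsub : p - 1 - 1 = p - 2 := by ring
  have hquotient : ‖x‖⁻¹ * (p * dampedPow m (p - 1) ‖x‖ - m * dampedPow m p ‖x‖) =
      p * dampedPow m (p - 2) ‖x‖ - m * dampedPow m (p - 1) ‖x‖ := by
    rw [mul_sub, mul_left_comm, inv_mul_dampedPow hx', mul_left_comm, inv_mul_dampedPow hx', hsub]
  rw [laplacian_comp_norm hx hderiv hderiv₂, hquotient, hsub]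
  ring

lemma le_laplacian_dampedPow_norm (hm : 0 ≤ m) (hp : 2 * p + finrank ℝ E - 1 ≤ 0) (hx : x ≠ 0) :
    p * (p + finrank ℝ E - 2) * dampedPow m (p - 2) ‖x‖ + m ^ 2 * dampedPow m p ‖x‖
      ≤ Δ (fun y : E => dampedPow m p ‖y‖) x := by
  have hdrift : m * (2 * p + finrank ℝ E - 1) * dampedPow m (p - 1) ‖x‖ ≤ 0 :=
    mul_nonpos_of_nonpos_of_nonneg (mul_nonpos_of_nonneg_of_nonpos hm hp)
      (dampedPow_nonneg (norm_nonneg x))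
  rw [laplacian_dampedPow_norm hx]
  linarith

end DampedPow

lemma isLittleO_rpow_rpow_atTop {p q : ℝ} (hpq : p < q) :
    (fun r : ℝ => r ^ p) =o[atTop] fun r => r ^ q := by
  refine isLittleO_of_tendsto' ?_ ?_
  · filter_upwards [eventually_gt_atTop 0] with r hr hzero
    exact absurd hzero (Real.rpow_pos_of_pos hr q).ne'
  · refine (tendsto_rpow_neg_atTop (sub_pos.mpr hpq)).congr' ?_
    filter_upwards [eventually_gt_atTop 0] with r hr
    rw [neg_sub, Real.rpow_sub hr]

lemma eventually_mul_rpow_mul_add_rpow_le (C : ℝ) {γ a b κ : ℝ} (hκ : 0 < κ) (hγ : 2 < γ)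
    (hab : a - γ < b - 2) :
    ∀ᶠ r : ℝ in atTop, C * r ^ (-γ) * (r ^ a + r ^ b) ≤ κ * r ^ (b - 2) := by
  have hlittleO : (fun r : ℝ => C * (r ^ (a - γ) + r ^ (b - γ))) =o[atTop] fun r => r ^ (b - 2) :=
    ((isLittleO_rpow_rpow_atTop hab).add
      (isLittleO_rpow_rpow_atTop (by linarith))).const_mul_left C
  filter_upwards [hlittleO.bound hκ, eventually_gt_atTop 0] with r hbound hr
  calc C * r ^ (-γ) * (r ^ a + r ^ b) = C * (r ^ (a - γ) + r ^ (b - γ)) := by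
        rw [sub_eq_neg_add, sub_eq_neg_add, Real.rpow_add hr, Real.rpow_add hr]
        ring
    _ ≤ ‖C * (r ^ (a - γ) + r ^ (b - γ))‖ := Real.le_norm_self _
    _ ≤ κ * ‖r ^ (b - 2)‖ := hbound
    _ = κ * r ^ (b - 2) := by rw [Real.norm_of_nonneg (by positivity)]

lemma rpow_add_rpow_mul_exp_norm_eq {E : Type*} [NormedAddCommGroup E] (a b m : ℝ) :
    (fun y : E => (‖y‖ ^ a + ‖y‖ ^ b) * Real.exp (-(m * ‖y‖))) =
      (fun y => dampedPow m a ‖y‖) + fun y => dampedPow m b ‖y‖ :=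
  funext fun _ => add_mul _ _ _

theorem stmt_10_general {E : Type*} [NormedAddCommGroup E] [InnerProductSpace ℝ E]
    [FiniteDimensional ℝ E] (C : ℝ) {γ a b : ℝ} (hγ : 2 < γ) (hab : a - γ < b - 2)
    (ha : 2 * a + finrank ℝ E - 1 ≤ 0) (hb : 2 * b + finrank ℝ E - 1 ≤ 0)
    (ha_sub : 0 ≤ a * (a + finrank ℝ E - 2)) (hb_sub : 0 < b * (b + finrank ℝ E - 2)) :
    ∃ R ≥ (1 : ℝ), ∀ m ≥ (0 : ℝ), ∀ x : E, R < ‖x‖ →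
      -Δ (fun y : E => (‖y‖ ^ a + ‖y‖ ^ b) * Real.exp (-(m * ‖y‖))) x
        + C * ‖x‖ ^ (-γ) * ((‖x‖ ^ a + ‖x‖ ^ b) * Real.exp (-(m * ‖x‖)))
        + m ^ 2 * ((‖x‖ ^ a + ‖x‖ ^ b) * Real.exp (-(m * ‖x‖))) ≤ 0 := by
  obtain ⟨R, hR⟩ := eventually_atTop.mp (eventually_mul_rpow_mul_add_rpow_le C hb_sub hγ hab)
  refine ⟨max R 1, le_max_right _ _, fun m hm x hx => ?_⟩
  obtain ⟨hRx, hone⟩ := max_lt_iff.mp hx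
  have hx₀ : x ≠ 0 := norm_pos_iff.mp (one_pos.trans hone)
  have hpotential : C * ‖x‖ ^ (-γ) * ((‖x‖ ^ a + ‖x‖ ^ b) * Real.exp (-(m * ‖x‖)))
      ≤ b * (b + finrank ℝ E - 2) * dampedPow m (b - 2) ‖x‖ := by
    rw [dampedPow, ← mul_assoc, ← mul_assoc]
    exact mul_le_mul_of_nonneg_right (hR ‖x‖ hRx.le) (Real.exp_nonneg _)
  have hgain : 0 ≤ a * (a + finrank ℝ E - 2) * dampedPow m (a - 2) ‖x‖ :=
    mul_nonneg ha_sub (dampedPow_nonneg (norm_nonneg x))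
  have hmass : m ^ 2 * ((‖x‖ ^ a + ‖x‖ ^ b) * Real.exp (-(m * ‖x‖))) =
      m ^ 2 * dampedPow m a ‖x‖ + m ^ 2 * dampedPow m b ‖x‖ := by
    unfold dampedPow
    ring
  rw [rpow_add_rpow_mul_exp_norm_eq, (contDiffAt_dampedPow_norm hx₀).laplacian_add
    (contDiffAt_dampedPow_norm hx₀)]
  linarith [le_laplacian_dampedPow_norm hm ha hx₀, le_laplacian_dampedPow_norm hm hb hx₀]

/-- the lower barrier `h(x) = (|x|^{-(N-2)} + |x|^β) e^{-m|x|}` satisfies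
`-Δh + C|x|^{-γ} h + m² h ≤ 0` outside a large ball, uniformly in `m ≥ 0`. -/
theorem stmt_10 (N : ℕ) (hN : 3 ≤ N) (C γ β : ℝ) (hC : 0 < C) (hγ : 2 < γ)
    (hβ₁ : -((N:ℝ) - 2) - (γ - 2) < β) (hβ₂ : β < -((N:ℝ) - 2)) :
    ∃ R ≥ (1:ℝ), ∀ m ≥ (0:ℝ), ∀ x : EuclideanSpace ℝ (Fin N), R < ‖x‖ →
      -lap (fun y => (‖y‖ ^ (-((N:ℝ) - 2)) + ‖y‖ ^ β) * Real.exp (-(m * ‖y‖))) x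
        + C * ‖x‖ ^ (-γ) * ((‖x‖ ^ (-((N:ℝ) - 2)) + ‖x‖ ^ β) * Real.exp (-(m * ‖x‖)))
        + m ^ 2 * ((‖x‖ ^ (-((N:ℝ) - 2)) + ‖x‖ ^ β) * Real.exp (-(m * ‖x‖))) ≤ 0 := by
  have hN' : (3 : ℝ) ≤ N := by exact_mod_cast hN
  have hfinrank : (finrank ℝ (EuclideanSpace ℝ (Fin N)) : ℝ) = N := by simp
  obtain ⟨R, hR, hbarrier⟩ := stmt_10_general (E := EuclideanSpace ℝ (Fin N)) C hγ
    (a := -((N : ℝ) - 2)) (b := β) (by linarith) (by linarith) (by linarith)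
    (by rw [hfinrank]; simp)
    (by rw [hfinrank]; exact mul_pos_of_neg_of_neg (by linarith) (by linarith))
  refine ⟨R, hR, fun m hm x hx => ?_⟩
  have hx₀ : x ≠ 0 := norm_pos_iff.mp (by linarith)
  rw [lap_eq_laplacian]
  · exact hbarrier m hm x hx
  · rw [rpow_add_rpow_mul_exp_norm_eq]
    exact (contDiffAt_dampedPow_norm hx₀).add (contDiffAt_dampedPow_norm hx₀)
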